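/- arXiv:2510.27258 — 12 statements merged into one kernel-verified Lean document; each statement's English description precedes it below -/
import Mathlib

section
/- Let W ∈ ℝ^{n×n} be the causally masked affinity matrix W_{i,j} = q_iᵀ k_j for j ≤ i and W_{i,j} = 0 for j > i. Then for every t ∈ {1,…,n}, the masked second-order numerator satisfies Σ_{j=1}^{t} (W Wᵀ)_{t,j} v_jᵀ = q_tᵀ (S^K_t C^{QV}_t − G_t), as an identity of row vectors in ℝ^{1×d_v}. -/
open Matrix Finset

/-- masked second-order numerator identity
`Σ_{j≤t} (W Wᵀ)_{t,j} vⱼᵀ = q_tᵀ (S^K_t C^{QV}_t − G_t)` as row vectors. -/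
theorem masked_second_order_numerator
    (n d dv : ℕ) (q k : Fin n → Fin d → ℝ) (v : Fin n → Fin dv → ℝ)
    (W : Matrix (Fin n) (Fin n) ℝ)
    (hW : ∀ i j : Fin n, W i j = if j ≤ i then q i ⬝ᵥ k j else 0) :
    ∀ t : Fin n,
      ∑ j ∈ Iic t, (W * Wᵀ) t j • v j
        = (q t) ᵥ*
            ((∑ i ∈ Iic t, vecMulVec (k i) (k i)) * (∑ i ∈ Iic t, vecMulVec (q i) (v i))
              - ∑ i ∈ Iic t, vecMulVec (k i) (k i) * (∑ j ∈ Iio i, vecMulVec (q j) (v j))) := by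
  intro t
  have key : ∀ i j : Fin n, (q t) ᵥ* (vecMulVec (k i) (k i) * vecMulVec (q j) (v j))
      = ((q t ⬝ᵥ k i) * (q j ⬝ᵥ k i)) • v j := by
    intro i j
    rw [← Matrix.vecMul_vecMul, Matrix.vecMul_vecMulVec, Matrix.vecMul_vecMulVec,
      smul_dotProduct, smul_eq_mul, dotProduct_comm (k i) (q j)]
  have hL : ∀ j ∈ Iic t, (W * Wᵀ) t j • v j
      = ∑ i ∈ Iic t, if i ≤ j then ((q t ⬝ᵥ k i) * (q j ⬝ᵥ k i)) • v j else 0 := by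
    intro j _
    have h : (W * Wᵀ) t j
        = ∑ i ∈ Iic t, if i ≤ j then ((q t ⬝ᵥ k i) * (q j ⬝ᵥ k i)) else 0 := by
      have hI : Iic t = Finset.univ.filter (fun i => i ≤ t) := by ext; simp
      rw [Matrix.mul_apply, hI, Finset.sum_filter]
      refine Finset.sum_congr rfl fun i _ => ?_
      rw [Matrix.transpose_apply, hW, hW]
      split_ifs <;> simp
    rw [h, Finset.sum_smul]
    refine Finset.sum_congr rfl fun i _ => ?_
    split_ifs <;> simp
  rw [Finset.sum_congr rfl hL, Finset.sum_comm, Matrix.sum_mul, ← Finset.sum_sub_distrib,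
    Matrix.vecMul_sum]
  refine Finset.sum_congr rfl fun i hi => ?_
  have hit : i ≤ t := Finset.mem_Iic.mp hi
  rw [Matrix.mul_sum, Matrix.mul_sum, Matrix.vecMul_sub, Matrix.vecMul_sum, Matrix.vecMul_sum]
  simp only [key]
  have hF : Iio i = (Iic t).filter (fun j => ¬ i ≤ j) := by
    ext j
    simp only [Finset.mem_Iio, Finset.mem_filter, Finset.mem_Iic, not_le]
    exact ⟨fun h => ⟨h.le.trans hit, h⟩, fun h => h.2⟩
  rw [hF, ← Finset.sum_filter, eq_sub_iff_add_eq]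
  exact Finset.sum_filter_add_sum_filter_not _ _ _
end

section
/- Let W ∈ ℝ^{n×n} be the causally masked affinity matrix W_{i,j} = q_iᵀ k_j for j ≤ i and W_{i,j} = 0 for j > i. Then for every t ∈ {1,…,n}, the masked second-order denominator satisfies Σ_{j=1}^{t} (W Wᵀ)_{t,j} = q_tᵀ (S^K_t m^Q_t − h_t), as an identity of real scalars. -/
open Matrix Finset

/-- masked second-order denominator identity
`Σ_{j≤t} (W Wᵀ)_{t,j} = q_tᵀ (S^K_t m^Q_t − h_t)` as scalars. -/
theorem masked_second_order_denominator
    (n d : ℕ) (q k : Fin n → Fin d → ℝ)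
    (W : Matrix (Fin n) (Fin n) ℝ)
    (hW : ∀ i j : Fin n, W i j = if j ≤ i then q i ⬝ᵥ k j else 0) :
    ∀ t : Fin n,
      ∑ j ∈ Iic t, (W * Wᵀ) t j
        = q t ⬝ᵥ
            ((∑ i ∈ Iic t, vecMulVec (k i) (k i)) *ᵥ (∑ i ∈ Iic t, q i)
              - ∑ i ∈ Iic t, (vecMulVec (k i) (k i)) *ᵥ (∑ j ∈ Iio i, q j)) := by
  intro t
  have key : ∀ (i : Fin n) (x : Fin d → ℝ),
      q t ⬝ᵥ (vecMulVec (k i) (k i) *ᵥ x) = (q t ⬝ᵥ k i) * (x ⬝ᵥ k i) := by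
    intro i x
    rw [dotProduct_mulVec, vecMul_vecMulVec, smul_dotProduct, smul_eq_mul,
      dotProduct_comm (k i) x]
  rw [sum_mulVec, ← Finset.sum_sub_distrib, dotProduct_sum]
  simp only [Matrix.mul_apply, transpose_apply]
  rw [Finset.sum_comm]
  have h1 : ∀ i ∈ (Finset.univ : Finset (Fin n)), i ∉ Iic t →
      ∑ j ∈ Iic t, W t i * W j i = 0 := by
    intro i _ hi
    have hi' : ¬ i ≤ t := by simpa using hi
    simp [hW t i, hi']
  rw [← Finset.sum_subset (Finset.subset_univ (Iic t)) h1]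
  refine Finset.sum_congr rfl fun i hi => ?_
  have hi' : i ≤ t := by simpa using hi
  rw [dotProduct_sub, key, key, ← mul_sub, ← Finset.mul_sum, hW t i, if_pos hi',
    sum_dotProduct, sum_dotProduct]
  congr 1
  have h2 : Iio i = (Iic t).filter (fun j => ¬ i ≤ j) := by
    ext j
    simp only [mem_Iio, mem_filter, mem_Iic, not_le]
    exact ⟨fun h => ⟨h.le.trans hi', h⟩, fun h => h.2⟩
  rw [h2, Finset.sum_filter, ← Finset.sum_sub_distrib]
  refine Finset.sum_congr rfl fun j _ => ?_
  rw [hW j i]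
  by_cases h : i ≤ j <;> simp [h]
end

section
/- The binary operation ⊕ on tuples (S, C, m, G, h) ∈ ℝ^{d×d} × ℝ^{d×d_v} × ℝ^d × ℝ^{d×d_v} × ℝ^d defined by (S_A, C_A, m_A, G_A, h_A) ⊕ (S_B, C_B, m_B, G_B, h_B) = (S_A + S_B, C_A + C_B, m_A + m_B, G_A + G_B + S_B C_A, h_A + h_B + S_B m_A) is associative, and the all-zero tuple is a two-sided identity for ⊕. -/
open Matrix

/-- Masked second-order HLA state `(S, C, m, G, h)`. -/
abbrev HLAState (d dv : ℕ) :=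
  Matrix (Fin d) (Fin d) ℝ × Matrix (Fin d) (Fin dv) ℝ × (Fin d → ℝ) ×
    Matrix (Fin d) (Fin dv) ℝ × (Fin d → ℝ)

/-- The semidirect-product concatenation operator of Eq. (semidirect). -/
def hlaOp (d dv : ℕ) (A B : HLAState d dv) : HLAState d dv :=
  (A.1 + B.1,
   A.2.1 + B.2.1,
   A.2.2.1 + B.2.2.1,
   A.2.2.2.1 + B.2.2.2.1 + B.1 * A.2.1,
   A.2.2.2.2 + B.2.2.2.2 + B.1 *ᵥ A.2.2.1)

/-- `⊕` is associative with the all-zero tuple as a two-sided identity. -/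
theorem hlaOp_assoc_and_zero_identity (d dv : ℕ) :
    (∀ A B C : HLAState d dv, hlaOp d dv (hlaOp d dv A B) C = hlaOp d dv A (hlaOp d dv B C)) ∧
    (∀ A : HLAState d dv, hlaOp d dv 0 A = A ∧ hlaOp d dv A 0 = A) := by
  refine ⟨fun A B C => ?_, fun A => ⟨?_, ?_⟩⟩
  · refine Prod.ext ?_ (Prod.ext ?_ (Prod.ext ?_ (Prod.ext ?_ ?_)))
    · simp only [hlaOp]; abel
    · simp only [hlaOp]; abel
    · simp only [hlaOp]; abel
    · simp only [hlaOp, Matrix.mul_add, Matrix.add_mul]; abel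
    · simp only [hlaOp, Matrix.mulVec_add, Matrix.add_mulVec]; abel
  · simp [hlaOp]
  · simp [hlaOp]
end

section
/- Define token segments T_i = (k_i k_iᵀ, q_i v_iᵀ, q_i, 0, 0) for i = 1,…,n and the operation (S_A, C_A, m_A, G_A, h_A) ⊕ (S_B, C_B, m_B, G_B, h_B) = (S_A + S_B, C_A + C_B, m_A + m_B, G_A + G_B + S_B C_A, h_A + h_B + S_B m_A). Then for every t ∈ {1,…,n}, the left fold ((T_1 ⊕ T_2) ⊕ ⋯ ) ⊕ T_t (starting from the all-zero tuple) equals (S^K_t, C^{QV}_t, m^Q_t, G_t, h_t). -/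
open Matrix Finset

/-- Token segment `T_i = (kᵢkᵢᵀ, qᵢvᵢᵀ, qᵢ, 0, 0)`. -/
def hlaToken (d dv : ℕ) (q k : ℕ → Fin d → ℝ) (v : ℕ → Fin dv → ℝ) (i : ℕ) :
    HLAState d dv :=
  (vecMulVec (k i) (k i), vecMulVec (q i) (v i), q i, 0, 0)

/-- the left fold of the token segments `T_1, …, T_t` under `⊕`
(starting from the all-zero tuple) equals `(S^K_t, C^{QV}_t, m^Q_t, G_t, h_t)`. -/
theorem hla_fold_eq_prefix_summaries
    (n d dv : ℕ) (q k : ℕ → Fin d → ℝ) (v : ℕ → Fin dv → ℝ) :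
    ∀ t, 1 ≤ t → t ≤ n →
      List.foldl (hlaOp d dv) 0 ((List.range t).map fun i => hlaToken d dv q k v (i + 1))
        = (∑ i ∈ Icc 1 t, vecMulVec (k i) (k i),
           ∑ i ∈ Icc 1 t, vecMulVec (q i) (v i),
           ∑ i ∈ Icc 1 t, q i,
           ∑ i ∈ Icc 1 t, vecMulVec (k i) (k i) * (∑ j ∈ Ico 1 i, vecMulVec (q j) (v j)),
           ∑ i ∈ Icc 1 t, (vecMulVec (k i) (k i)) *ᵥ (∑ j ∈ Ico 1 i, q j)) := by
  intro t _ _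
  have hI : ∀ s : ℕ, Ico 1 (s + 1) = Icc 1 s := by
    intro s
    ext x
    simp only [Finset.mem_Ico, Finset.mem_Icc]
    omega
  clear * - hI
  induction t with
  | zero => simp; rfl
  | succ t ih =>
    rw [List.range_succ, List.map_append, List.foldl_append, ih]
    simp only [List.map_cons, List.map_nil, List.foldl_cons, List.foldl_nil, hlaOp, hlaToken,
      Finset.sum_Icc_succ_top (Nat.le_add_left 1 t), hI, add_zero]
end

section
/- Let the sequence of tokens be split into two adjacent blocks A = {1,…,p} and B = {p+1,…,p+r} with p + r = t. Define block-local summaries S_X = Σ_{i∈X} k_i k_iᵀ, C_X = Σ_{i∈X} q_i v_iᵀ, m_X = Σ_{i∈X} q_i, G_X = Σ_{i∈X} (k_i k_iᵀ) C^{loc}_{X,<i}, h_X = Σ_{i∈X} (k_i k_iᵀ) m^{loc}_{X,<i}, where C^{loc}_{X,<i} = Σ_{j∈X, j<i} q_j v_jᵀ and m^{loc}_{X,<i} = Σ_{j∈X, j<i} q_j are the exclusive prefixes within block X. Then the global summaries over {1,…,t} satisfy G_{A∪B} = G_A + G_B + S_B C_A and h_{A∪B} = h_A + h_B + S_B m_A,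 where G_{A∪B} = Σ_{i=1}^{t} (k_i k_iᵀ)(Σ_{j<i} q_j v_jᵀ) and h_{A∪B} = Σ_{i=1}^{t} (k_i k_iᵀ)(Σ_{j<i} q_j). -/
open Matrix Finset

/-- for adjacent blocks `A = {1,…,p}` and `B = {p+1,…,p+r}` with
`p + r = t`, the global cross-summaries satisfy
`G_{A∪B} = G_A + G_B + S_B C_A` and `h_{A∪B} = h_A + h_B + S_B m_A`. -/
theorem hla_block_merge
    (n d dv : ℕ) (q k : ℕ → Fin d → ℝ) (v : ℕ → Fin dv → ℝ)
    (p r t : ℕ) (hpr : p + r = t) (ht : t ≤ n) :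
    (∑ i ∈ Icc 1 t, vecMulVec (k i) (k i) * (∑ j ∈ Ico 1 i, vecMulVec (q j) (v j))
      = (∑ i ∈ Icc 1 p, vecMulVec (k i) (k i) * (∑ j ∈ Ico 1 i, vecMulVec (q j) (v j)))
        + (∑ i ∈ Icc (p + 1) t,
            vecMulVec (k i) (k i) * (∑ j ∈ Ico (p + 1) i, vecMulVec (q j) (v j)))
        + (∑ i ∈ Icc (p + 1) t, vecMulVec (k i) (k i))
            * (∑ i ∈ Icc 1 p, vecMulVec (q i) (v i)))
    ∧ (∑ i ∈ Icc 1 t, (vecMulVec (k i) (k i)) *ᵥ (∑ j ∈ Ico 1 i, q j)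
      = (∑ i ∈ Icc 1 p, (vecMulVec (k i) (k i)) *ᵥ (∑ j ∈ Ico 1 i, q j))
        + (∑ i ∈ Icc (p + 1) t, (vecMulVec (k i) (k i)) *ᵥ (∑ j ∈ Ico (p + 1) i, q j))
        + (∑ i ∈ Icc (p + 1) t, vecMulVec (k i) (k i)) *ᵥ (∑ i ∈ Icc 1 p, q i)) := by
  have hI : ∀ a b : ℕ, Icc a b = Ico a (b + 1) := by
    intro a b; ext x; simp only [mem_Icc, mem_Ico]; omega
  simp only [hI]
  constructor
  · rw [← Finset.sum_Ico_consecutive _ (show 1 ≤ p + 1 by omega) (show p + 1 ≤ t + 1 by omega),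
      add_assoc, Matrix.sum_mul, ← Finset.sum_add_distrib]
    congr 1
    refine Finset.sum_congr rfl fun i hi => ?_
    rw [← Finset.sum_Ico_consecutive _ (show 1 ≤ p + 1 by omega) (mem_Ico.mp hi).1,
      Matrix.mul_add, add_comm]
  · rw [← Finset.sum_Ico_consecutive _ (show 1 ≤ p + 1 by omega) (show p + 1 ≤ t + 1 by omega),
      add_assoc, Matrix.sum_mulVec, ← Finset.sum_add_distrib]
    congr 1
    refine Finset.sum_congr rfl fun i hi => ?_
    rw [← Finset.sum_Ico_consecutive _ (show 1 ≤ p + 1 by omega) (mem_Ico.mp hi).1,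
      Matrix.mulVec_add, add_comm]
end

section
/- For every t ∈ {1,…,n}, the strictly causal asymmetric second-order output satisfies Σ_{j=1}^{t} Σ_{i=j}^{t} (q_tᵀ k_i)(q_iᵀ k_j) v_jᵀ = q_tᵀ E_t, as an identity of row vectors in ℝ^{1×d_v}, where E_t = Σ_{i=1}^{t} k_i (q_iᵀ P_i) and P_i = Σ_{j=1}^{i} k_j v_jᵀ. -/
open Matrix Finset

/-- the strictly causal asymmetric second-order (AHLA) output satisfies
`Σ_{j=1}^{t} Σ_{i=j}^{t} (q_tᵀ kᵢ)(qᵢᵀ kⱼ) vⱼᵀ = q_tᵀ E_t`, where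
`E_t = Σ_{i=1}^{t} kᵢ (qᵢᵀ Pᵢ)` and `Pᵢ = Σ_{j=1}^{i} kⱼ vⱼᵀ`. -/
theorem ahla_masked_streaming_numerator
    (n d dv : ℕ) (q k : ℕ → Fin d → ℝ) (v : ℕ → Fin dv → ℝ) :
    ∀ t, 1 ≤ t → t ≤ n →
      ∑ j ∈ Icc 1 t, ∑ i ∈ Icc j t, ((q t ⬝ᵥ k i) * (q i ⬝ᵥ k j)) • v j
        = (q t) ᵥ*
            (∑ i ∈ Icc 1 t,
              vecMulVec (k i) ((q i) ᵥ* (∑ j ∈ Icc 1 i, vecMulVec (k j) (v j)))) := by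
  intro t _ _
  have key : ∀ (x : Fin d → ℝ) (s : Finset ℕ) (a : ℕ → Fin d → ℝ) (b : ℕ → Fin dv → ℝ),
      x ᵥ* (∑ i ∈ s, vecMulVec (a i) (b i)) = ∑ i ∈ s, (x ⬝ᵥ a i) • b i := by
    intro x s a b
    induction s using Finset.induction_on with
    | empty => simp
    | insert c s hc ih =>
      rw [Finset.sum_insert hc, Finset.sum_insert hc, Matrix.vecMul_add, ih,
        Matrix.vecMul_vecMulVec]
  rw [key]
  simp only [key, Finset.smul_sum, smul_smul]
  apply Finset.sum_comm'
  intro x y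
  simp only [Finset.mem_Icc]
  omega
end

section
/- The binary operation ⊕ on tuples (R, P, m, E, n) ∈ ℝ^{d×d} × ℝ^{d×d_v} × ℝ^d × ℝ^{d×d_v} × ℝ^d defined by (R_A, P_A, m_A, E_A, n_A) ⊕ (R_B, P_B, m_B, E_B, n_B) = (R_A + R_B, P_A + P_B, m_A + m_B, E_A + E_B + R_B P_A, n_A + n_B + R_B m_A) is associative, and the all-zero tuple is a two-sided identity for ⊕. -/
open Matrix

/-- AHLA scan state `(R, P, m, E, n)`. -/
abbrev AHLAState (d dv : ℕ) :=
  Matrix (Fin d) (Fin d) ℝ × Matrix (Fin d) (Fin dv) ℝ × (Fin d → ℝ) ×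
    Matrix (Fin d) (Fin dv) ℝ × (Fin d → ℝ)

/-- The AHLA concatenation operator. -/
def ahlaOp (d dv : ℕ) (A B : AHLAState d dv) : AHLAState d dv :=
  (A.1 + B.1,
   A.2.1 + B.2.1,
   A.2.2.1 + B.2.2.1,
   A.2.2.2.1 + B.2.2.2.1 + B.1 * A.2.1,
   A.2.2.2.2 + B.2.2.2.2 + B.1 *ᵥ A.2.2.1)

/-- `⊕` on AHLA states is associative with the all-zero tuple as a
two-sided identity. -/
theorem ahlaOp_assoc_and_zero_identity (d dv : ℕ) :
    (∀ A B C : AHLAState d dv,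
        ahlaOp d dv (ahlaOp d dv A B) C = ahlaOp d dv A (ahlaOp d dv B C)) ∧
    (∀ A : AHLAState d dv, ahlaOp d dv 0 A = A ∧ ahlaOp d dv A 0 = A) := by
  refine ⟨fun A B C => ?_, fun A => ⟨?_, ?_⟩⟩
  · simp only [ahlaOp, Prod.mk.injEq]
    refine ⟨add_assoc _ _ _, add_assoc _ _ _, add_assoc _ _ _, ?_, ?_⟩
    · rw [Matrix.mul_add, Matrix.add_mul]
      abel
    · rw [Matrix.mulVec_add, Matrix.add_mulVec]
      abel
  · simp [ahlaOp]
  · simp [ahlaOp]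
end

section
/- Let the sequence of tokens be split into two adjacent blocks A = {1,…,p} and B = {p+1,…,p+r} with p + r = t. Define block-local summaries R_X = Σ_{i∈X} k_i q_iᵀ, P_X = Σ_{i∈X} k_i v_iᵀ, m_X = Σ_{i∈X} k_i, E_X = Σ_{i∈X} k_i (q_iᵀ P^{loc}_{X,≤i}), n_X = Σ_{i∈X} (q_iᵀ m^{loc}_{X,≤i}) k_i, where P^{loc}_{X,≤i} = Σ_{j∈X, j≤i} k_j v_jᵀ and m^{loc}_{X,≤i} = Σ_{j∈X, j≤i} k_j are the inclusive prefixes within block X. Then the global summaries over {1,…,t} satisfy E_{A∪B} = E_A + E_B + R_B P_A and n_{A∪B} = n_A + n_B + R_B m_A, where E_{A∪B} = Σ_{i=1}^{t} k_i (q_iᵀ Σ_{j≤i} k_j v_jᵀ) and n_{A∪B} = Σ_{i=1}^{t} (q_iᵀ Σ_{j≤i} k_j) k_i. -/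
open Matrix Finset

theorem Icc_split_aux {M : Type*} [AddCommMonoid M] (f : ℕ → M) (p i : ℕ) (h : p ≤ i) :
    ∑ j ∈ Icc 1 i, f j = ∑ j ∈ Icc 1 p, f j + ∑ j ∈ Icc (p + 1) i, f j := by
  rw [← Finset.sum_union]
  · congr 1
    ext x
    simp only [Finset.mem_union, Finset.mem_Icc]
    omega
  · rw [Finset.disjoint_left]
    intro x
    simp only [Finset.mem_Icc]
    omega

/-- for adjacent blocks `A = {1,…,p}` and `B = {p+1,…,p+r}` with
`p + r = t`, the global AHLA summaries satisfy `E_{A∪B} = E_A + E_B + R_B P_A`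
and `n_{A∪B} = n_A + n_B + R_B m_A`. -/
theorem ahla_block_merge
    (n d dv : ℕ) (q k : ℕ → Fin d → ℝ) (v : ℕ → Fin dv → ℝ)
    (p r t : ℕ) (hpr : p + r = t) (ht : t ≤ n) :
    (∑ i ∈ Icc 1 t, vecMulVec (k i) ((q i) ᵥ* (∑ j ∈ Icc 1 i, vecMulVec (k j) (v j)))
      = (∑ i ∈ Icc 1 p,
            vecMulVec (k i) ((q i) ᵥ* (∑ j ∈ Icc 1 i, vecMulVec (k j) (v j))))
        + (∑ i ∈ Icc (p + 1) t,
            vecMulVec (k i) ((q i) ᵥ* (∑ j ∈ Icc (p + 1) i, vecMulVec (k j) (v j))))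
        + (∑ i ∈ Icc (p + 1) t, vecMulVec (k i) (q i))
            * (∑ i ∈ Icc 1 p, vecMulVec (k i) (v i)))
    ∧ (∑ i ∈ Icc 1 t, (q i ⬝ᵥ (∑ j ∈ Icc 1 i, k j)) • k i
      = (∑ i ∈ Icc 1 p, (q i ⬝ᵥ (∑ j ∈ Icc 1 i, k j)) • k i)
        + (∑ i ∈ Icc (p + 1) t, (q i ⬝ᵥ (∑ j ∈ Icc (p + 1) i, k j)) • k i)
        + (∑ i ∈ Icc (p + 1) t, vecMulVec (k i) (q i)) *ᵥ (∑ i ∈ Icc 1 p, k i)) := by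
  have hpt : p ≤ t := by omega
  constructor
  · rw [Icc_split_aux _ p t hpt, add_assoc, Matrix.sum_mul, ← Finset.sum_add_distrib]
    congr 1
    refine Finset.sum_congr rfl fun i hi => ?_
    have hi' : p ≤ i := by
      have := (Finset.mem_Icc.mp hi).1
      omega
    rw [Icc_split_aux _ p i hi', Matrix.vecMul_add, Matrix.vecMulVec_add, add_comm,
      Matrix.vecMulVec_mul]
  · rw [Icc_split_aux _ p t hpt, add_assoc, Matrix.sum_mulVec, ← Finset.sum_add_distrib]
    congr 1
    refine Finset.sum_congr rfl fun i hi => ?_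
    have hi' : p ≤ i := by
      have := (Finset.mem_Icc.mp hi).1
      omega
    rw [Icc_split_aux _ p i hi', dotProduct_add, add_smul, add_comm,
      Matrix.vecMulVec_mulVec]
    simp
end

section
/- Define token segments T_i = (k_i q_iᵀ, k_i v_iᵀ, k_i, (q_iᵀ k_i) k_i v_iᵀ, (q_iᵀ k_i) k_i) for i = 1,…,n and the operation (R_A, P_A, m_A, E_A, n_A) ⊕ (R_B, P_B, m_B, E_B, n_B) = (R_A + R_B, P_A + P_B, m_A + m_B, E_A + E_B + R_B P_A, n_A + n_B + R_B m_A). Then for every t ∈ {1,…,n}, the left fold ((T_1 ⊕ T_2) ⊕ ⋯ ) ⊕ T_t (starting from the all-zero tuple) equals (R_t, P_t, m^K_t, E_t, n_t), where R_t = Σ_{i=1}^{t} k_i q_iᵀ, P_t = Σ_{i=1}^{t} k_i v_iᵀ, m^K_t = Σ_{i=1}^{t} k_i, E_t = Σ_{i=1}^{t} k_i (q_iᵀ P_i), and n_t = Σ_{i=1}^{t} (q_iᵀ m^K_i) k_i. -/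
open Matrix Finset

/-- Token segment `T_i = (kᵢqᵢᵀ, kᵢvᵢᵀ, kᵢ, (qᵢᵀkᵢ) kᵢvᵢᵀ, (qᵢᵀkᵢ) kᵢ)`. -/
def ahlaToken (d dv : ℕ) (q k : ℕ → Fin d → ℝ) (v : ℕ → Fin dv → ℝ) (i : ℕ) :
    AHLAState d dv :=
  (vecMulVec (k i) (q i), vecMulVec (k i) (v i), k i,
   (q i ⬝ᵥ k i) • vecMulVec (k i) (v i), (q i ⬝ᵥ k i) • k i)

/-- the left fold of `T_1, …, T_t` under `⊕` (starting from the
all-zero tuple) equals `(R_t, P_t, m^K_t, E_t, n_t)`. -/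
theorem ahla_fold_eq_prefix_summaries
    (n d dv : ℕ) (q k : ℕ → Fin d → ℝ) (v : ℕ → Fin dv → ℝ) :
    ∀ t, 1 ≤ t → t ≤ n →
      List.foldl (ahlaOp d dv) 0 ((List.range t).map fun i => ahlaToken d dv q k v (i + 1))
        = (∑ i ∈ Icc 1 t, vecMulVec (k i) (q i),
           ∑ i ∈ Icc 1 t, vecMulVec (k i) (v i),
           ∑ i ∈ Icc 1 t, k i,
           ∑ i ∈ Icc 1 t,
             vecMulVec (k i) ((q i) ᵥ* (∑ j ∈ Icc 1 i, vecMulVec (k j) (v j))),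
           ∑ i ∈ Icc 1 t, (q i ⬝ᵥ (∑ j ∈ Icc 1 i, k j)) • k i) := by
  intro t _ _
  clear * -
  induction t with
  | zero => simp; rfl
  | succ t ih =>
    rw [List.range_succ, List.map_append, List.foldl_append, ih]
    simp only [List.map_cons, List.map_nil, List.foldl_cons, List.foldl_nil, ahlaOp, ahlaToken]
    simp only [Finset.sum_Icc_succ_top (Nat.le_add_left 1 t)]
    refine Prod.ext rfl (Prod.ext rfl (Prod.ext rfl (Prod.ext ?_ ?_)))
    · simp only [vecMulVec_mul, vecMul_add, vecMul_vecMulVec, vecMulVec_add, vecMulVec_smul]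
      abel
    · simp only [vecMulVec_mulVec, dotProduct_add, add_smul, op_smul_eq_smul]
      abel
end

section
/- Let W ∈ ℝ^{n×n} be the causally masked affinity matrix W_{i,j} = q_iᵀ k_j for j ≤ i and W_{i,j} = 0 for j > i. Then for every t ∈ {1,…,n}, the strictly causal third-order numerator satisfies Σ_{j=1}^{t} (Σ_{u=1}^{t} (W Wᵀ)_{t,u} W_{u,j}) v_jᵀ = q_tᵀ (Σ_{u=1}^{t} S^K_u (q_u q_uᵀ) P^{KV}_u), as an identity of row vectors in ℝ^{1×d_v}. -/
open Matrix Finset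

/-- strictly causal third-order numerator identity
`Σ_{j≤t} (Σ_{u≤t} (W Wᵀ)_{t,u} W_{u,j}) vⱼᵀ = q_tᵀ (Σ_{u≤t} S^K_u (q_u q_uᵀ) P^{KV}_u)`
as row vectors. -/
theorem masked_third_order_numerator
    (n d dv : ℕ) (q k : Fin n → Fin d → ℝ) (v : Fin n → Fin dv → ℝ)
    (W : Matrix (Fin n) (Fin n) ℝ)
    (hW : ∀ i j : Fin n, W i j = if j ≤ i then q i ⬝ᵥ k j else 0) :
    ∀ t : Fin n,
      ∑ j ∈ Iic t, (∑ u ∈ Iic t, (W * Wᵀ) t u * W u j) • v j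
        = (q t) ᵥ*
            (∑ u ∈ Iic t,
              (∑ i ∈ Iic u, vecMulVec (k i) (k i)) * vecMulVec (q u) (q u)
                * (∑ i ∈ Iic u, vecMulVec (k i) (v i))) := by
  intro t
  have key : ∀ (m : ℕ) (x : Fin d → ℝ) (s : Finset (Fin n)) (b : Fin n → Fin m → ℝ),
      x ᵥ* (∑ i ∈ s, vecMulVec (k i) (b i)) = ∑ i ∈ s, (x ⬝ᵥ k i) • b i := by
    intro m x s b
    rw [Matrix.vecMul_sum]
    exact Finset.sum_congr rfl fun i _ => by rw [Matrix.vecMul_vecMulVec]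
  rw [Matrix.vecMul_sum]
  simp_rw [Finset.sum_smul]
  rw [Finset.sum_comm]
  refine Finset.sum_congr rfl fun u hu => ?_
  have hut : u ≤ t := Finset.mem_Iic.1 hu
  have hWW : (W * Wᵀ) t u = ∑ i ∈ Iic u, (q t ⬝ᵥ k i) * (k i ⬝ᵥ q u) := by
    rw [Matrix.mul_apply]
    symm
    refine Finset.sum_subset_zero_on_sdiff (Finset.subset_univ _) ?_ ?_
    · intro i hi
      have : ¬ i ≤ u := by simpa using hi
      simp [hW, this]
    · intro i hi
      have hi' : i ≤ u := Finset.mem_Iic.1 hi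
      simp [hW, hi', hi'.trans hut, dotProduct_comm (k i)]
  rw [← Matrix.vecMul_vecMul, ← Matrix.vecMul_vecMul, key, Matrix.vecMul_vecMulVec,
    key, sum_dotProduct]
  simp_rw [smul_dotProduct, smul_eq_mul]
  rw [← hWW]
  symm
  refine Finset.sum_subset_zero_on_sdiff (Finset.Iic_subset_Iic.2 hut) ?_ ?_
  · intro i hi
    have : ¬ i ≤ u := by
      have := (Finset.mem_sdiff.1 hi).2
      simpa using this
    simp [hW u i, this]
  · intro i hi
    have hi' : i ≤ u := Finset.mem_Iic.1 hi
    simp [hW u i, hi']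
end

section
/- Let W ∈ ℝ^{n×n} be the causally masked affinity matrix W_{i,j} = q_iᵀ k_j for j ≤ i and W_{i,j} = 0 for j > i. Then for every t ∈ {1,…,n}, the strictly causal third-order denominator satisfies Σ_{j=1}^{t} Σ_{u=1}^{t} (W Wᵀ)_{t,u} W_{u,j} = q_tᵀ (Σ_{u=1}^{t} S^K_u (q_u q_uᵀ) m^K_u), as an identity of real scalars. -/
open Matrix Finset

/-- strictly causal third-order denominator identity
`Σ_{j≤t} Σ_{u≤t} (W Wᵀ)_{t,u} W_{u,j} = q_tᵀ (Σ_{u≤t} S^K_u (q_u q_uᵀ) m^K_u)`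
as scalars. -/
theorem masked_third_order_denominator
    (n d : ℕ) (q k : Fin n → Fin d → ℝ)
    (W : Matrix (Fin n) (Fin n) ℝ)
    (hW : ∀ i j : Fin n, W i j = if j ≤ i then q i ⬝ᵥ k j else 0) :
    ∀ t : Fin n,
      ∑ j ∈ Iic t, ∑ u ∈ Iic t, (W * Wᵀ) t u * W u j
        = q t ⬝ᵥ
            (∑ u ∈ Iic t,
              ((∑ i ∈ Iic u, vecMulVec (k i) (k i)) * vecMulVec (q u) (q u)) *ᵥ
                (∑ i ∈ Iic u, k i)) := by
  intro t
  rw [Finset.sum_comm, dotProduct_sum]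
  refine Finset.sum_congr rfl fun u hu => ?_
  have hut : u ≤ t := Finset.mem_Iic.mp hu
  rw [← Finset.mul_sum]
  have h1 : (W * Wᵀ) t u = ∑ i ∈ Iic u, (q t ⬝ᵥ k i) * (q u ⬝ᵥ k i) := by
    rw [Matrix.mul_apply]
    symm
    apply Finset.sum_subset_zero_on_sdiff (Finset.subset_univ _)
    · intro i hi
      have hi' : ¬ i ≤ u := by simpa using hi
      simp [Matrix.transpose_apply, hW u i, hi']
    · intro i hi
      have hi' : i ≤ u := Finset.mem_Iic.mp hi
      simp [Matrix.transpose_apply, hW, hi', hi'.trans hut]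
  have h2 : ∑ j ∈ Iic t, W u j = q u ⬝ᵥ ∑ i ∈ Iic u, k i := by
    rw [dotProduct_sum]
    symm
    apply Finset.sum_subset_zero_on_sdiff (Finset.Iic_subset_Iic.mpr hut)
    · intro i hi
      have hi' : ¬ i ≤ u := by
        have := (Finset.mem_sdiff.mp hi).2
        simpa using this
      simp [hW u i, hi']
    · intro i hi
      have hi' : i ≤ u := Finset.mem_Iic.mp hi
      simp [hW, hi']
  rw [h1, h2, ← Matrix.mulVec_mulVec, Matrix.vecMulVec_mulVec, op_smul_eq_smul,
    Matrix.mulVec_smul, dotProduct_smul, smul_eq_mul, mul_comm, Matrix.sum_mulVec]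
  congr 1
  rw [dotProduct_sum]
  refine Finset.sum_congr rfl fun i _ => ?_
  rw [Matrix.vecMulVec_mulVec, op_smul_eq_smul, dotProduct_smul, smul_eq_mul,
    dotProduct_comm (k i) (q u), mul_comm]
end

section
/- For every t ∈ {1,…,n}, Σ_{u=1}^{t} S^K_u (q_u q_uᵀ) P^{KV}_u = S^K_t S^Q_t P^{KV}_t − Σ_{u=1}^{t} (k_u k_uᵀ) S^Q_{u−1} P^{KV}_u − Σ_{u=1}^{t} S^K_{u−1} S^Q_{u−1} (k_u v_uᵀ), as an identity of d×d_v real matrices. -/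
open Matrix Finset

/-- `Σ_{u=1}^{t} S^K_u (q_u q_uᵀ) P^{KV}_u
  = S^K_t S^Q_t P^{KV}_t − Σ_{u=1}^{t} (k_u k_uᵀ) S^Q_{u−1} P^{KV}_u
    − Σ_{u=1}^{t} S^K_{u−1} S^Q_{u−1} (k_u v_uᵀ)` as `d × d_v` matrices. -/
theorem third_order_prefix_sum_identity
    (n d dv : ℕ) (q k : ℕ → Fin d → ℝ) (v : ℕ → Fin dv → ℝ) :
    ∀ t, 1 ≤ t → t ≤ n →
      ∑ u ∈ Icc 1 t,
          (∑ i ∈ Icc 1 u, vecMulVec (k i) (k i)) * vecMulVec (q u) (q u)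
            * (∑ i ∈ Icc 1 u, vecMulVec (k i) (v i))
        = (∑ i ∈ Icc 1 t, vecMulVec (k i) (k i)) * (∑ i ∈ Icc 1 t, vecMulVec (q i) (q i))
            * (∑ i ∈ Icc 1 t, vecMulVec (k i) (v i))
          - ∑ u ∈ Icc 1 t,
              vecMulVec (k u) (k u) * (∑ i ∈ Ico 1 u, vecMulVec (q i) (q i))
                * (∑ i ∈ Icc 1 u, vecMulVec (k i) (v i))
          - ∑ u ∈ Icc 1 t,
              (∑ i ∈ Ico 1 u, vecMulVec (k i) (k i)) * (∑ i ∈ Ico 1 u, vecMulVec (q i) (q i))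
                * vecMulVec (k u) (v u) := by
  intro t _ _
  have hI : ∀ m : ℕ, Ico 1 (m + 1) = Icc 1 m := by
    intro m
    ext x
    simp only [Finset.mem_Ico, Finset.mem_Icc]
    omega
  clear * - hI
  induction t with
  | zero => simp
  | succ m ih =>
    rw [Finset.sum_Icc_succ_top (by omega), ih,
      Finset.sum_Icc_succ_top (b := m) (f := fun u => vecMulVec (k u) (k u) *
        (∑ i ∈ Ico 1 u, vecMulVec (q i) (q i)) * (∑ i ∈ Icc 1 u, vecMulVec (k i) (v i)))
        (by omega),
      Finset.sum_Icc_succ_top (b := m) (f := fun u => (∑ i ∈ Ico 1 u, vecMulVec (k i) (k i)) *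
        (∑ i ∈ Ico 1 u, vecMulVec (q i) (q i)) * vecMulVec (k u) (v u))
        (by omega), hI,
      Finset.sum_Icc_succ_top (b := m) (f := fun i => vecMulVec (k i) (k i)) (by omega),
      Finset.sum_Icc_succ_top (b := m) (f := fun i => vecMulVec (q i) (q i)) (by omega),
      Finset.sum_Icc_succ_top (b := m) (f := fun i => vecMulVec (k i) (v i)) (by omega)]
    simp only [Matrix.add_mul, Matrix.mul_add]
    abel
end
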